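/- Let 𝒳 ⊆ L⁰₊ be convex, solid and bounded in probability. Then the following are equivalent: (i) whenever (Xₙ) is an 𝒳-valued sequence converging to 0 in measure, every sequence of forward convex combinations of (Xₙ) also converges to 0 in measure; (ii) there exists a probability measure Q ~ P such that 𝒳 is uniformly Q-integrable. -/

import Mathlib

open MeasureTheory Filter Topology

/-- `L⁰₊`: (representatives of) measurable functions that are nonnegative `P`-a.s. -/
def L0pos {Ω : Type*} [MeasurableSpace Ω] (P : Measure Ω) : Set (Ω → ℝ) :=
  {X | Measurable X ∧ ∀ᵐ ω ∂P, 0 ≤ X ω}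

/-- A set `S ⊆ L⁰₊` is solid if `X ∈ S`, `Y ∈ L⁰₊` and `Y ≤ X` a.e. imply `Y ∈ S`. -/
def Solid {Ω : Type*} [MeasurableSpace Ω] (P : Measure Ω) (S : Set (Ω → ℝ)) : Prop :=
  ∀ X ∈ S, ∀ Y ∈ L0pos P, (∀ᵐ ω ∂P, Y ω ≤ X ω) → Y ∈ S

/-- `𝒳` is uniformly `Q`-integrable:  `sup_{X ∈ 𝒳} E_Q[X 1_{X > n}] → 0`. -/
def UnifInt {Ω : Type*} [MeasurableSpace Ω] (Q : Measure Ω) (𝒳 : Set (Ω → ℝ)) : Prop :=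
  Tendsto (fun n : ℕ => ⨆ X ∈ 𝒳, ∫⁻ ω in {ω | (n : ℝ) < X ω}, ENNReal.ofReal (X ω) ∂Q)
    atTop (𝓝 0)


lemma aux_inv_bd {x : ℝ} (hx : 0 ≤ x) : 0 ≤ (1 + x)⁻¹ ∧ (1 + x)⁻¹ ≤ 1 :=
  ⟨by positivity, inv_le_one_of_one_le₀ (by linarith)⟩

lemma aux_integrable {Ω : Type*} [MeasurableSpace Ω] {P : Measure Ω} [IsProbabilityMeasure P]
    {f : Ω → ℝ} (hm : Measurable f) {C : ℝ} (h : ∀ᵐ ω ∂P, 0 ≤ f ω ∧ f ω ≤ C) : Integrable f P := by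
  refine Integrable.of_bound hm.aestronglyMeasurable C ?_
  filter_upwards [h] with ω hω
  rw [Real.norm_eq_abs, abs_of_nonneg hω.1]
  exact hω.2

lemma aux_mid {x y : ℝ} (hx : 0 ≤ x) (hy : 0 ≤ y) :
    ((1 + x)⁻¹ - (1 + y)⁻¹) ^ 2 ≤
      2 * (1 + x)⁻¹ + 2 * (1 + y)⁻¹ - 4 * (1 + ((1 / 2 : ℝ) * x + (1 / 2 : ℝ) * y))⁻¹ := by
  have h : 2 * (1 + x)⁻¹ + 2 * (1 + y)⁻¹ - 4 * (1 + ((1 / 2 : ℝ) * x + (1 / 2 : ℝ) * y))⁻¹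
      - ((1 + x)⁻¹ - (1 + y)⁻¹) ^ 2
      = (x - y) ^ 2 * (2 * (1 + x) * (1 + y) - (2 + x + y)) /
          ((1 + x) ^ 2 * (1 + y) ^ 2 * (2 + x + y)) := by
    have h1 : 1 + x ≠ 0 := by positivity
    have h2 : 1 + y ≠ 0 := by positivity
    have h3 : 2 + x + y ≠ 0 := by positivity
    have h4 : (1 + ((1 / 2 : ℝ) * x + (1 / 2 : ℝ) * y)) = (2 + x + y) / 2 := by ring
    rw [h4]
    field_simp
    ring
  have h5 : 0 ≤ (x - y) ^ 2 * (2 * (1 + x) * (1 + y) - (2 + x + y)) /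
          ((1 + x) ^ 2 * (1 + y) ^ 2 * (2 + x + y)) := by
    apply div_nonneg
    · apply mul_nonneg (sq_nonneg _)
      nlinarith [mul_nonneg hx hy]
    · positivity
  linarith

lemma aux_abs (d : ℝ) {c : ℝ} (hc : 0 < c) : |d| ≤ d ^ 2 / (2 * c) + c / 2 := by
  have h : d ^ 2 / (2 * c) + c / 2 - |d| = (|d| - c) ^ 2 / (2 * c) := by
    rw [← sq_abs d]; field_simp; ring
  have : 0 ≤ (|d| - c) ^ 2 / (2 * c) := by positivity
  linarith

/-- existence of an approximate-minimiser limit -/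
lemma aux_opt {Ω : Type*} [MeasurableSpace Ω] (P : Measure Ω) [IsProbabilityMeasure P]
    (K : Set (Ω → ℝ)) (hK : K ⊆ L0pos P) (hne : K.Nonempty) (hc : Convex ℝ K) :
    ∃ (X : ℕ → Ω → ℝ) (p : Ω → ℝ) (I : ℝ), (∀ n, X n ∈ K) ∧ Measurable p ∧
      (∀ᵐ ω ∂P, Tendsto (fun n => (1 + X n ω)⁻¹) atTop (𝓝 (p ω))) ∧
      (∀ Y ∈ K, I ≤ ∫ ω, (1 + Y ω)⁻¹ ∂P) ∧
      Tendsto (fun n => ∫ ω, (1 + X n ω)⁻¹ ∂P) atTop (𝓝 I) := by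
  set F : (Ω → ℝ) → ℝ := fun Y => ∫ ω, (1 + Y ω)⁻¹ ∂P with hF
  have hmeas : ∀ Y ∈ K, Measurable (fun ω => (1 + Y ω)⁻¹) := fun Y hY =>
    ((hK hY).1.const_add 1).inv
  have hintg : ∀ Y ∈ K, Integrable (fun ω => (1 + Y ω)⁻¹) P := fun Y hY => by
    refine aux_integrable (hmeas Y hY) (C := 1) ?_
    filter_upwards [(hK hY).2] with ω hω using aux_inv_bd hω
  have hbdd : BddBelow (F '' K) := by
    refine ⟨0, ?_⟩
    rintro _ ⟨Y, hY, rfl⟩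
    apply integral_nonneg_of_ae
    filter_upwards [(hK hY).2] with ω hω using (aux_inv_bd hω).1
  set I := sInf (F '' K) with hI
  have hIle : ∀ Y ∈ K, I ≤ F Y := fun Y hY => csInf_le hbdd ⟨Y, hY, rfl⟩
  have hex : ∀ n : ℕ, ∃ Y ∈ K, F Y < I + (1 / 4 : ℝ) ^ n := by
    intro n
    obtain ⟨_, ⟨Y, hY, rfl⟩, h⟩ := exists_lt_of_csInf_lt (hne.image F)
      (show sInf (F '' K) < I + (1 / 4 : ℝ) ^ n by
        have : (0 : ℝ) < (1 / 4 : ℝ) ^ n := by positivity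
        linarith)
    exact ⟨Y, hY, h⟩
  choose X hXK hXF using hex
  have hlim : Tendsto (fun n => F (X n)) atTop (𝓝 I) := by
    refine tendsto_of_tendsto_of_tendsto_of_le_of_le (g := fun _ => I)
      (h := fun n => I + (1 / 4 : ℝ) ^ n) tendsto_const_nhds ?_
      (fun n => hIle _ (hXK n)) (fun n => (hXF n).le)
    have := (tendsto_pow_atTop_nhds_zero_of_lt_one (r := (1 / 4 : ℝ)) (by norm_num)
      (by norm_num)).const_add I
    simpa using this
  have hcau : ∀ N n m : ℕ, N ≤ n → N ≤ m →
      eLpNorm ((fun ω => (1 + X n ω)⁻¹) - (fun ω => (1 + X m ω)⁻¹)) 1 P <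
        ENNReal.ofReal (3 * (1 / 2 : ℝ) ^ N) := by
    intro N n m hn hm
    have hmid : (1 / 2 : ℝ) • X n + (1 / 2 : ℝ) • X m ∈ K :=
      hc (hXK n) (hXK m) (by norm_num) (by norm_num) (by norm_num)
    set c : ℝ := (1 / 2 : ℝ) ^ N with hcdef
    have hc0 : 0 < c := by positivity
    have hc4 : (1 / 4 : ℝ) ^ N = c ^ 2 := by
      rw [hcdef, ← pow_mul, mul_comm, pow_mul]; norm_num
    have hle : ∀ k, N ≤ k → F (X k) ≤ I + c ^ 2 := by
      intro k hk
      rw [← hc4]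
      have : (1 / 4 : ℝ) ^ k ≤ (1 / 4 : ℝ) ^ N :=
        pow_le_pow_of_le_one (by norm_num) (by norm_num) hk
      linarith [hXF k]
    rw [eLpNorm_one_eq_lintegral_enorm, ← ofReal_integral_norm_eq_lintegral_enorm
      ((hintg _ (hXK n)).sub (hintg _ (hXK m)))]
    apply (ENNReal.ofReal_lt_ofReal_iff (by positivity)).2
    have hi1 := hintg _ (hXK n)
    have hi2 := hintg _ (hXK m)
    have hi3 := hintg _ hmid
    have hstep : ∫ ω, ‖((fun ω => (1 + X n ω)⁻¹) - (fun ω => (1 + X m ω)⁻¹)) ω‖ ∂P ≤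
        ∫ ω, ((2 * (1 + X n ω)⁻¹ + 2 * (1 + X m ω)⁻¹ -
          4 * (1 + ((1 / 2 : ℝ) • X n + (1 / 2 : ℝ) • X m) ω)⁻¹) * (1 / (2 * c)) + c / 2) ∂P := by
      apply integral_mono_ae
      · exact (hi1.sub hi2).norm
      · exact ((((hi1.const_mul 2).add (hi2.const_mul 2)).sub (hi3.const_mul 4)).mul_const _).add
          (integrable_const _)
      · filter_upwards [(hK (hXK n)).2, (hK (hXK m)).2] with ω h1 h2
        simp only [Pi.sub_apply, Real.norm_eq_abs, Pi.add_apply, Pi.smul_apply, smul_eq_mul]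
        refine (aux_abs _ hc0).trans ?_
        have := aux_mid h1 h2
        rw [div_eq_mul_one_div]
        gcongr
    have hcomp : ∫ ω, ((2 * (1 + X n ω)⁻¹ + 2 * (1 + X m ω)⁻¹ -
          4 * (1 + ((1 / 2 : ℝ) • X n + (1 / 2 : ℝ) • X m) ω)⁻¹) * (1 / (2 * c)) + c / 2) ∂P
        = (2 * F (X n) + 2 * F (X m) - 4 * F ((1 / 2 : ℝ) • X n + (1 / 2 : ℝ) • X m))
          * (1 / (2 * c)) + c / 2 := by
      have j1 : Integrable (fun ω => 2 * (1 + X n ω)⁻¹ + 2 * (1 + X m ω)⁻¹) P :=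
        (hi1.const_mul 2).add (hi2.const_mul 2)
      have j2 : Integrable (fun ω => 2 * (1 + X n ω)⁻¹ + 2 * (1 + X m ω)⁻¹ -
          4 * (1 + ((1 / 2 : ℝ) • X n + (1 / 2 : ℝ) • X m) ω)⁻¹) P :=
        j1.sub (hi3.const_mul 4)
      rw [integral_add (j2.mul_const _) (integrable_const _), integral_mul_const,
        integral_sub j1 (hi3.const_mul 4),
        integral_add (hi1.const_mul 2) (hi2.const_mul 2), integral_const_mul, integral_const_mul,
        integral_const_mul]
      simp [hF]
    have hfin : (2 * F (X n) + 2 * F (X m) - 4 * F ((1 / 2 : ℝ) • X n + (1 / 2 : ℝ) • X m))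
          * (1 / (2 * c)) + c / 2 ≤ (4 * c ^ 2) * (1 / (2 * c)) + c / 2 := by
      gcongr
      linarith [hle n hn, hle m hm, hIle _ hmid]
    have : (4 * c ^ 2) * (1 / (2 * c)) + c / 2 = 5 / 2 * c := by field_simp; ring
    linarith
  have hB : ∑' i : ℕ, ENNReal.ofReal (3 * (1 / 2 : ℝ) ^ i) ≠ ⊤ := by
    have hs : Summable (fun i : ℕ => 3 * (1 / 2 : ℝ) ^ i) :=
      (summable_geometric_of_lt_one (by norm_num) (by norm_num)).mul_left 3
    rw [← ENNReal.ofReal_tsum_of_nonneg (fun i => by positivity) hs]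
    exact ENNReal.ofReal_ne_top
  have hae := Lp.ae_tendsto_of_cauchy_eLpNorm
    (fun n => (hmeas _ (hXK n)).aestronglyMeasurable (μ := P)) le_rfl hB hcau
  obtain ⟨p, hp, hpl⟩ := measurable_limit_of_tendsto_metrizable_ae
    (fun n => (hmeas _ (hXK n)).aemeasurable (μ := P)) hae
  exact ⟨X, p, I, hXK, hp, hpl, hIle, hlim⟩

/-- first order condition -/
lemma aux_foc {Ω : Type*} [MeasurableSpace Ω] (P : Measure Ω) [IsProbabilityMeasure P]
    (K : Set (Ω → ℝ)) (hK : K ⊆ L0pos P) (hne : K.Nonempty) (hc : Convex ℝ K) :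
    ∃ (p : Ω → ℝ), Measurable p ∧ (∀ᵐ ω ∂P, 0 ≤ p ω ∧ p ω ≤ 1) ∧
      (∀ ε : ℝ, (∀ Y ∈ K, 1 - ε ≤ ∫ ω, (1 + Y ω)⁻¹ ∂P) → 1 - ε ≤ ∫ ω, p ω ∂P) ∧
      (∀ Y ∈ K, ∫⁻ ω, ENNReal.ofReal (p ω * (p ω * (1 + Y ω))) ∂P
        ≤ ENNReal.ofReal (∫ ω, p ω ∂P)) := by
  obtain ⟨X, p, I, hXK, hp, hpl, hIle, hlim⟩ := aux_opt P K hK hne hc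
  have hX0 : ∀ᵐ ω ∂P, ∀ n, 0 ≤ X n ω := ae_all_iff.2 fun n => (hK (hXK n)).2
  have hp01 : ∀ᵐ ω ∂P, 0 ≤ p ω ∧ p ω ≤ 1 := by
    filter_upwards [hX0, hpl] with ω h1 h2
    exact ⟨ge_of_tendsto' h2 fun n => (aux_inv_bd (h1 n)).1,
      le_of_tendsto' h2 fun n => (aux_inv_bd (h1 n)).2⟩
  have hpint : Integrable p P := aux_integrable hp hp01
  have hmeas : ∀ n, Measurable (fun ω => (1 + X n ω)⁻¹) := fun n =>
    ((hK (hXK n)).1.const_add 1).inv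
  have hIp : I = ∫ ω, p ω ∂P := by
    refine tendsto_nhds_unique hlim ?_
    refine tendsto_integral_of_dominated_convergence (fun _ => 1)
      (fun n => (hmeas n).aestronglyMeasurable) (integrable_const _) (fun n => ?_) hpl
    filter_upwards [hX0] with ω h
    rw [Real.norm_eq_abs, abs_of_nonneg (aux_inv_bd (h n)).1]
    exact (aux_inv_bd (h n)).2
  refine ⟨p, hp, hp01, ?_, ?_⟩
  · intro ε h
    rw [← hIp]
    exact ge_of_tendsto' hlim fun n => h _ (hXK n)
  intro Y hY
  have hYm := (hK hY).1
  have hY0 := (hK hY).2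
  -- inequality for fixed t
  have hA : ∀ t : ℝ, 0 < t → t < 1 →
      I ≤ ∫ ω, p ω / (1 - t + t * (p ω * (1 + Y ω))) ∂P := by
    intro t ht0 ht1
    have hconv : Tendsto (fun n => ∫ ω, (1 + ((1 - t) • X n + t • Y) ω)⁻¹ ∂P) atTop
        (𝓝 (∫ ω, p ω / (1 - t + t * (p ω * (1 + Y ω))) ∂P)) := by
      refine tendsto_integral_of_dominated_convergence (fun _ => 1)
        (fun n => ?_) (integrable_const _) (fun n => ?_) ?_
      · exact (((((hK (hXK n)).1.const_smul (1 - t)).add (hYm.const_smul t)).const_add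
          1).inv).aestronglyMeasurable
      · filter_upwards [hX0, hY0] with ω h1 h2
        have h3 : 0 ≤ ((1 - t) • X n + t • Y) ω := by
          simp only [Pi.add_apply, Pi.smul_apply, smul_eq_mul]
          have := h1 n
          have : 0 ≤ 1 - t := by linarith
          positivity
        rw [Real.norm_eq_abs, abs_of_nonneg (aux_inv_bd h3).1]
        exact (aux_inv_bd h3).2
      · filter_upwards [hX0, hY0, hpl, hp01] with ω h1 h2 h3 h4
        have hD : 0 < 1 - t + t * (p ω * (1 + Y ω)) := by
          have := mul_nonneg ht0.le (mul_nonneg h4.1 (by linarith : (0:ℝ) ≤ 1 + Y ω))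
          linarith
        have := h3.div (((h3.mul_const (1 + Y ω)).const_mul t).const_add (1 - t)) hD.ne'
        refine this.congr fun n => ?_
        have h5 := h1 n
        simp only [Pi.add_apply, Pi.smul_apply, smul_eq_mul]
        have h6 : (1 + X n ω) ≠ 0 := by positivity
        have h7 : (0:ℝ) < 1 - t := by linarith
        have h8 : 1 + ((1 - t) * X n ω + t * Y ω) ≠ 0 := by positivity
        have h9 : 1 - t + t * ((1 + X n ω)⁻¹ * (1 + Y ω)) =
          (1 + ((1 - t) * X n ω + t * Y ω)) * (1 + X n ω)⁻¹ := by
          field_simp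
          ring
        rw [Pi.div_apply, h9]
        field_simp
    refine ge_of_tendsto' hconv fun n => hIle _ ?_
    exact hc (hXK n) hY (by linarith) ht0.le (by ring)
  have hB : ∀ t : ℝ, 0 < t → t < 1 →
      ∫⁻ ω, ENNReal.ofReal (p ω * (p ω * (1 + Y ω)) / (1 - t + t * (p ω * (1 + Y ω)))) ∂P
        ≤ ENNReal.ofReal I := by
    intro t ht0 ht1
    have ht2 : 0 < 1 - t := by linarith
    have hi1 : Integrable (fun ω => p ω / (1 - t + t * (p ω * (1 + Y ω)))) P := by
      refine aux_integrable (by fun_prop) (C := 1 / (1 - t)) ?_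
      filter_upwards [hY0, hp01] with ω h1 h2
      have := mul_nonneg ht0.le (mul_nonneg h2.1 (by linarith : (0:ℝ) ≤ 1 + Y ω))
      constructor
      · exact div_nonneg h2.1 (by linarith)
      · exact div_le_div₀ (by norm_num) h2.2 ht2 (by linarith)
    have heq : ∀ᵐ ω ∂P, p ω * (p ω * (1 + Y ω)) / (1 - t + t * (p ω * (1 + Y ω))) =
        t⁻¹ * (p ω - (1 - t) * (p ω / (1 - t + t * (p ω * (1 + Y ω))))) := by
      filter_upwards [hY0, hp01] with ω h1 h2
      have := mul_nonneg ht0.le (mul_nonneg h2.1 (by linarith : (0:ℝ) ≤ 1 + Y ω))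
      have hD : 1 - t + t * (p ω * (1 + Y ω)) ≠ 0 := by linarith
      rw [eq_inv_mul_iff_mul_eq₀ ht0.ne', ← mul_div_assoc, ← mul_div_assoc, eq_sub_iff_add_eq,
        ← add_div, div_eq_iff hD]
      ring
    have hi2 : Integrable (fun ω => p ω * (p ω * (1 + Y ω)) /
        (1 - t + t * (p ω * (1 + Y ω)))) P :=
      ((hpint.sub (hi1.const_mul (1 - t))).const_mul t⁻¹).congr (heq.mono fun _ h => h.symm)
    rw [← ofReal_integral_eq_lintegral_ofReal hi2]
    · apply ENNReal.ofReal_le_ofReal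
      rw [integral_congr_ae heq, integral_const_mul, integral_sub hpint (hi1.const_mul _),
        integral_const_mul, ← hIp, inv_mul_le_iff₀ ht0]
      nlinarith [hA t ht0 ht1]
    · filter_upwards [hY0, hp01] with ω h1 h2
      have := mul_nonneg ht0.le (mul_nonneg h2.1 (by linarith : (0:ℝ) ≤ 1 + Y ω))
      exact div_nonneg (mul_nonneg h2.1 (mul_nonneg h2.1 (by linarith))) (by linarith)
  rw [← hIp]
  set t : ℕ → ℝ := fun k => 1 / ((k : ℝ) + 1 + 1) with ht
  have ht0 : ∀ k, 0 < t k := fun k => by positivity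
  have ht1 : ∀ k, t k < 1 := fun k => by
    rw [ht]; simp only
    rw [div_lt_one (by positivity)]
    have : (0:ℝ) ≤ k := Nat.cast_nonneg k
    linarith
  have htl : Tendsto t atTop (𝓝 0) := by
    have := (tendsto_one_div_add_atTop_nhds_zero_nat (𝕜 := ℝ)).comp (tendsto_add_atTop_nat 1)
    refine this.congr fun k => ?_
    simp [ht]
  calc ∫⁻ ω, ENNReal.ofReal (p ω * (p ω * (1 + Y ω))) ∂P
      = ∫⁻ ω, liminf (fun k => ENNReal.ofReal (p ω * (p ω * (1 + Y ω)) /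
          (1 - t k + t k * (p ω * (1 + Y ω))))) atTop ∂P := by
        congr 1
        ext ω
        refine (Tendsto.liminf_eq ?_).symm
        refine (ENNReal.continuous_ofReal.tendsto _).comp ?_
        have h1 : Tendsto (fun k => (1 - t k + t k * (p ω * (1 + Y ω)))) atTop (𝓝 1) := by
          have := (htl.const_sub 1).add (htl.mul_const (p ω * (1 + Y ω)))
          simpa using this
        have := (tendsto_const_nhds (x := p ω * (p ω * (1 + Y ω)))).div h1 one_ne_zero
        rw [div_one] at this
        exact this
    _ ≤ liminf (fun k => ∫⁻ ω, ENNReal.ofReal (p ω * (p ω * (1 + Y ω)) /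
          (1 - t k + t k * (p ω * (1 + Y ω)))) ∂P) atTop := by
        apply lintegral_liminf_le
        intro k
        fun_prop
    _ ≤ ENNReal.ofReal I := by
        refine liminf_le_of_le ?_ ?_
        · isBoundedDefault
        · intro b hb
          obtain ⟨k, hk⟩ := hb.exists
          exact hk.trans (hB _ (ht0 k) (ht1 k))

lemma aux_set {Ω : Type*} [MeasurableSpace Ω] (P : Measure Ω) [IsProbabilityMeasure P]
    (K : Set (Ω → ℝ)) (hK : K ⊆ L0pos P) (hne : K.Nonempty) (hc : Convex ℝ K) (ε : ℝ)
    (hε : ∀ Y ∈ K, 1 - ε ≤ ∫ ω, (1 + Y ω)⁻¹ ∂P) :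
    ∃ B : Set Ω, MeasurableSet B ∧ P Bᶜ ≤ ENNReal.ofReal (4 * ε) ∧
      ∀ Y ∈ K, ∫⁻ ω in B, ENNReal.ofReal (Y ω) ∂P ≤ ENNReal.ofReal (4 * ε) := by
  obtain ⟨p, hp, hp01, hpε, hpK⟩ := aux_foc P K hK hne hc
  have hpi : 1 - ε ≤ ∫ ω, p ω ∂P := hpε ε hε
  have hpint : Integrable p P := aux_integrable hp hp01
  have hp2 : Integrable (fun ω => p ω * p ω) P := by
    refine aux_integrable (hp.mul hp) (C := 1) ?_
    filter_upwards [hp01] with ω h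
    exact ⟨mul_nonneg h.1 h.1, by nlinarith [h.1, h.2]⟩
  have h1p : Integrable (fun ω => 1 - p ω) P := (integrable_const _).sub hpint
  have hI1 : ∫ ω, (1 - p ω) ∂P = 1 - ∫ ω, p ω ∂P := by
    rw [integral_sub (integrable_const _) hpint]; simp
  have hle1 : ∫ ω, p ω ∂P ≤ 1 := by
    have : 0 ≤ ∫ ω, (1 - p ω) ∂P := by
      apply integral_nonneg_of_ae
      filter_upwards [hp01] with ω h
      simp only [Pi.zero_apply]; linarith [h.2]
    linarith
  have hε0 : 0 ≤ ε := by linarith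
  have hB : MeasurableSet {ω | 1 / 2 ≤ p ω} := measurableSet_le measurable_const hp
  refine ⟨{ω | 1 / 2 ≤ p ω}, hB, ?_, ?_⟩
  · rw [← lintegral_indicator_one hB.compl]
    calc ∫⁻ ω, ({ω | 1 / 2 ≤ p ω}ᶜ).indicator 1 ω ∂P
        ≤ ∫⁻ ω, ENNReal.ofReal (4 * (1 - p ω)) ∂P := by
          apply lintegral_mono_ae
          filter_upwards [hp01] with ω h
          by_cases hω : 1 / 2 ≤ p ω
          · rw [Set.indicator_of_notMem (by simpa using hω)]
            exact zero_le
          · have h2 : (1 : ENNReal) ≤ ENNReal.ofReal (4 * (1 - p ω)) := by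
              rw [ENNReal.one_le_ofReal]; push Not at hω; linarith
            exact (Set.indicator_le_self _ _ _).trans h2
      _ = ENNReal.ofReal (4 * ∫ ω, (1 - p ω) ∂P) := by
          rw [← integral_const_mul, ofReal_integral_eq_lintegral_ofReal (h1p.const_mul 4)]
          filter_upwards [hp01] with ω h
          simp only [Pi.zero_apply]; linarith [h.2]
      _ ≤ ENNReal.ofReal (4 * ε) := by
          apply ENNReal.ofReal_le_ofReal
          linarith
  · intro Y hY
    have hYm := (hK hY).1
    have hY0 := (hK hY).2
    have hsplit : ∫⁻ ω, ENNReal.ofReal (p ω * p ω) ∂P + ∫⁻ ω, ENNReal.ofReal (p ω * p ω * Y ω) ∂P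
        ≤ ENNReal.ofReal (∫ ω, p ω ∂P) := by
      rw [← lintegral_add_left (by fun_prop)]
      refine le_trans (le_of_eq ?_) (hpK Y hY)
      apply lintegral_congr_ae
      filter_upwards [hY0] with ω h
      rw [← ENNReal.ofReal_add (mul_self_nonneg _) (mul_nonneg (mul_self_nonneg _) h)]
      congr 1; ring
    rw [← ofReal_integral_eq_lintegral_ofReal hp2
      (Filter.Eventually.of_forall fun ω => mul_self_nonneg _)] at hsplit
    have hkey : ∫⁻ ω, ENNReal.ofReal (p ω * p ω * Y ω) ∂P ≤ ENNReal.ofReal ε := by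
      have h3 : ENNReal.ofReal (∫ ω, p ω ∂P) ≤
          ENNReal.ofReal (∫ ω, p ω * p ω ∂P) + ENNReal.ofReal ε := by
        rw [← ENNReal.ofReal_add (integral_nonneg fun ω => mul_self_nonneg _) hε0]
        apply ENNReal.ofReal_le_ofReal
        have : ∫ ω, p ω ∂P ≤ ∫ ω, (p ω * p ω + (1 - p ω)) ∂P := by
          apply integral_mono_ae hpint (hp2.add h1p)
          filter_upwards [hp01] with ω h
          simp only [Pi.add_apply]
          nlinarith [h.1, h.2, sq_nonneg (p ω - 1)]
        rw [integral_add hp2 h1p] at this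
        linarith
      exact (ENNReal.add_le_add_iff_left ENNReal.ofReal_ne_top).1 (hsplit.trans h3)
    calc ∫⁻ ω in {ω | 1 / 2 ≤ p ω}, ENNReal.ofReal (Y ω) ∂P
        ≤ ∫⁻ ω in {ω | 1 / 2 ≤ p ω}, ENNReal.ofReal 4 * ENNReal.ofReal (p ω * p ω * Y ω) ∂P := by
          apply setLIntegral_mono_ae (by fun_prop)
          filter_upwards [hY0] with ω h hω
          rw [← ENNReal.ofReal_mul (by norm_num)]
          apply ENNReal.ofReal_le_ofReal
          have hω' : 1 / 2 ≤ p ω := hω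
          have : 1 ≤ 4 * (p ω * p ω) := by nlinarith
          nlinarith
      _ ≤ ∫⁻ ω, ENNReal.ofReal 4 * ENNReal.ofReal (p ω * p ω * Y ω) ∂P := setLIntegral_le_lintegral _ _
      _ = ENNReal.ofReal 4 * ∫⁻ ω, ENNReal.ofReal (p ω * p ω * Y ω) ∂P :=
          lintegral_const_mul _ (by fun_prop)
      _ ≤ ENNReal.ofReal 4 * ENNReal.ofReal ε := by gcongr
      _ = ENNReal.ofReal (4 * ε) := by rw [ENNReal.ofReal_mul (by norm_num)]

lemma aux_tim_ac {Ω : Type*} [MeasurableSpace Ω] {P Q : Measure Ω} [IsFiniteMeasure P]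
    [IsFiniteMeasure Q] (h : Q ≪ P) {X : ℕ → Ω → ℝ} (hX : ∀ n, Measurable (X n)) {g : Ω → ℝ}
    (ht : TendstoInMeasure P X atTop g) : TendstoInMeasure Q X atTop g := by
  rw [exists_seq_tendstoInMeasure_atTop_iff (fun n => (hX n).aestronglyMeasurable)] at ht ⊢
  intro ns hns
  obtain ⟨ns', h1, h2⟩ := ht ns hns
  exact ⟨ns', h1, h.ae_le h2⟩

lemma aux_tim_of {Ω : Type*} [MeasurableSpace Ω] (P : Measure Ω) [IsProbabilityMeasure P]
    (X : ℕ → Ω → ℝ) (hX : ∀ n, X n ∈ L0pos P)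
    (h : Tendsto (fun n => ∫ ω, (1 + X n ω)⁻¹ ∂P) atTop (𝓝 1)) :
    TendstoInMeasure P X atTop (fun _ => (0 : ℝ)) := by
  have hmeas : ∀ n, Measurable (fun ω => (1 + X n ω)⁻¹) := fun n => ((hX n).1.const_add 1).inv
  have hX0 : ∀ᵐ ω ∂P, ∀ n, 0 ≤ X n ω := ae_all_iff.2 fun n => (hX n).2
  have hintg : ∀ n, Integrable (fun ω => (1 + X n ω)⁻¹) P := fun n => by
    refine aux_integrable (hmeas n) (C := 1) ?_
    filter_upwards [(hX n).2] with ω hω using aux_inv_bd hω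
  have h1 : TendstoInMeasure P (fun n ω => (1 + X n ω)⁻¹) atTop (fun _ => (1 : ℝ)) := by
    apply tendstoInMeasure_of_tendsto_eLpNorm (p := 1) one_ne_zero
      (fun n => (hmeas n).aestronglyMeasurable) aestronglyMeasurable_const
    have h2 : Tendsto (fun n => ENNReal.ofReal (1 - ∫ ω, (1 + X n ω)⁻¹ ∂P)) atTop (𝓝 0) := by
      have := (ENNReal.continuous_ofReal.tendsto _).comp (h.const_sub 1)
      rw [sub_self, ENNReal.ofReal_zero] at this
      exact this
    refine h2.congr fun n => ?_
    rw [eLpNorm_one_eq_lintegral_enorm, ← ofReal_integral_norm_eq_lintegral_enorm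
      ((hintg n).sub (integrable_const _))]
    congr 1
    have : ∫ ω, (1 - (1 + X n ω)⁻¹) ∂P = 1 - ∫ ω, (1 + X n ω)⁻¹ ∂P := by
      rw [integral_sub (integrable_const _) (hintg n)]; simp
    rw [← this]
    apply integral_congr_ae
    filter_upwards [(hX n).2] with ω hω
    simp only [Pi.sub_apply, Real.norm_eq_abs]
    rw [abs_sub_comm, abs_of_nonneg (by linarith [(aux_inv_bd hω).2])]
  rw [exists_seq_tendstoInMeasure_atTop_iff (fun n => (hmeas n).aestronglyMeasurable)] at h1
  rw [exists_seq_tendstoInMeasure_atTop_iff (fun n => (hX n).1.aestronglyMeasurable)]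
  intro ns hns
  obtain ⟨ns', h3, h4⟩ := h1 ns hns
  refine ⟨ns', h3, ?_⟩
  filter_upwards [h4] with ω h5
  have := (h5.inv₀ one_ne_zero).sub_const 1
  simpa using this

lemma aux_of_tim {Ω : Type*} [MeasurableSpace Ω] (P : Measure Ω) [IsProbabilityMeasure P]
    (X : ℕ → Ω → ℝ) (hX : ∀ n, X n ∈ L0pos P)
    (h : TendstoInMeasure P X atTop (fun _ => (0 : ℝ))) :
    Tendsto (fun n => ∫ ω, (1 + X n ω)⁻¹ ∂P) atTop (𝓝 1) := by
  have hmeas : ∀ n, Measurable (fun ω => (1 + X n ω)⁻¹) := fun n => ((hX n).1.const_add 1).inv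
  have hX0 : ∀ᵐ ω ∂P, ∀ n, 0 ≤ X n ω := ae_all_iff.2 fun n => (hX n).2
  apply tendsto_of_subseq_tendsto
  intro ns hns
  obtain ⟨ms, hms, hae⟩ := (h.comp hns).exists_seq_tendsto_ae
  refine ⟨ms, ?_⟩
  have : ∫ _ : Ω, (1 : ℝ) ∂P = 1 := by simp
  suffices hs : Tendsto (fun n => ∫ ω, (1 + X (ns (ms n)) ω)⁻¹ ∂P) atTop
      (𝓝 (∫ _ : Ω, (1 : ℝ) ∂P)) by rwa [this] at hs
  refine tendsto_integral_of_dominated_convergence (fun _ => 1)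
      (fun n => (hmeas _).aestronglyMeasurable) (integrable_const _) (fun n => ?_) ?_
  · filter_upwards [hX0] with ω h
    rw [Real.norm_eq_abs, abs_of_nonneg (aux_inv_bd (h _)).1]
    exact (aux_inv_bd (h _)).2
  · filter_upwards [hae] with ω h
    have := (h.const_add 1).inv₀ (by norm_num)
    simpa using this

lemma aux_L0conv {Ω : Type*} [MeasurableSpace Ω] (P : Measure Ω) : Convex ℝ (L0pos P) := by
  intro X hX Y hY a b ha hb _
  refine ⟨(hX.1.const_smul a).add (hY.1.const_smul b), ?_⟩
  filter_upwards [hX.2, hY.2] with ω h1 h2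
  simp only [Pi.add_apply, Pi.smul_apply, smul_eq_mul]
  positivity

lemma aux_le_one {Ω : Type*} [MeasurableSpace Ω] (P : Measure Ω) [IsProbabilityMeasure P]
    {Y : Ω → ℝ} (hY : Y ∈ L0pos P) : ∫ ω, (1 + Y ω)⁻¹ ∂P ≤ 1 := by
  have : ∫ _ : Ω, (1 : ℝ) ∂P = 1 := by simp
  refine le_trans ?_ this.le
  refine integral_mono_ae ?_ (integrable_const _) ?_
  · refine aux_integrable ((hY.1.const_add 1).inv) (C := 1) ?_
    filter_upwards [hY.2] with ω hω using aux_inv_bd hω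
  · filter_upwards [hY.2] with ω hω
    exact (aux_inv_bd hω).2

lemma aux_locconv {Ω : Type*} [MeasurableSpace Ω] (P : Measure Ω) [IsProbabilityMeasure P]
    (𝒳 : Set (Ω → ℝ)) (h𝒳 : 𝒳 ⊆ L0pos P) (h0 : (0 : Ω → ℝ) ∈ 𝒳)
    (H : ∀ X : ℕ → Ω → ℝ, (∀ n, X n ∈ 𝒳) →
        TendstoInMeasure P X atTop (fun _ => (0 : ℝ)) →
        ∀ Y : ℕ → Ω → ℝ, (∀ n, Y n ∈ convexHull ℝ {g | ∃ k, n ≤ k ∧ g = X k}) →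
          TendstoInMeasure P Y atTop (fun _ => (0 : ℝ))) (ε : ℝ) (hε : 0 < ε) :
    ∃ δ > 0, ∀ Y ∈ convexHull ℝ {X | X ∈ 𝒳 ∧ 1 - δ ≤ ∫ ω, (1 + X ω)⁻¹ ∂P},
      1 - ε ≤ ∫ ω, (1 + Y ω)⁻¹ ∂P := by
  by_contra hcon
  push Not at hcon
  have hc' : ∀ n : ℕ, ∃ Y : Ω → ℝ, ∃ t : Finset (Ω → ℝ),
      (∀ X ∈ t, X ∈ 𝒳 ∧ 1 - 1 / ((n : ℝ) + 1) ≤ ∫ ω, (1 + X ω)⁻¹ ∂P) ∧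
      Y ∈ convexHull ℝ (t : Set (Ω → ℝ)) ∧ ∫ ω, (1 + Y ω)⁻¹ ∂P < 1 - ε := by
    intro n
    obtain ⟨Y, hY, hlt⟩ := hcon (1 / ((n : ℝ) + 1)) (by positivity)
    rw [convexHull_eq_union_convexHull_finite_subsets] at hY
    simp only [Set.mem_iUnion] at hY
    obtain ⟨t, ht, hYt⟩ := hY
    exact ⟨Y, t, fun X hX => ht hX, hYt, hlt⟩
  choose Y t ht hYt hlt using hc'
  set X : ℕ → Ω → ℝ := fun k => (t (Nat.unpair k).1).toList.getD (Nat.unpair k).2 0 with hXdef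
  have hXcase : ∀ k, ((Nat.unpair k).2 < (t (Nat.unpair k).1).card ∧ X k ∈ t (Nat.unpair k).1)
      ∨ X k = 0 := by
    intro k
    by_cases hk : (Nat.unpair k).2 < (t (Nat.unpair k).1).toList.length
    · left
      refine ⟨by simpa using hk, ?_⟩
      rw [hXdef]
      simp only
      rw [List.getD_eq_getElem _ _ hk, ← Finset.mem_toList]
      exact List.getElem_mem _
    · right
      rw [hXdef]
      simp only
      exact List.getD_eq_default _ _ (not_lt.1 hk)
  have hX𝒳 : ∀ k, X k ∈ 𝒳 := by
    intro k
    rcases hXcase k with h | h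
    · exact (ht _ _ h.2).1
    · rw [h]; exact h0
  have hYX : ∀ n, Y n ∈ convexHull ℝ {g | ∃ k, n ≤ k ∧ g = X k} := by
    intro n
    refine convexHull_mono ?_ (hYt n)
    intro g hg
    obtain ⟨j, hj, hjg⟩ := List.getElem_of_mem (Finset.mem_toList.2 hg)
    refine ⟨Nat.pair n j, Nat.left_le_pair n j, ?_⟩
    rw [hXdef]
    simp only [Nat.unpair_pair]
    rw [List.getD_eq_getElem _ _ hj, hjg]
  have hXlim : Tendsto (fun k => ∫ ω, (1 + X k ω)⁻¹ ∂P) atTop (𝓝 1) := by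
    rw [Metric.tendsto_nhds]
    intro η hη
    obtain ⟨N, hN⟩ := exists_nat_one_div_lt hη
    rw [← Nat.cofinite_eq_atTop, eventually_cofinite]
    refine Set.Finite.subset (s := (fun q : ℕ × ℕ => Nat.pair q.1 q.2) ''
      (((Finset.range N).sigma (fun n => Finset.range (t n).card)).image
        (fun q : (_ : ℕ) × ℕ => (q.1, q.2)) : Finset (ℕ × ℕ))) ((Finset.finite_toSet _).image _) ?_
    intro k hk
    replace hk : η ≤ dist (∫ ω, (1 + X k ω)⁻¹ ∂P) 1 := not_lt.1 hk
    rcases hXcase k with h | h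
    · refine ⟨Nat.unpair k, ?_, Nat.pair_unpair k⟩
      simp only [Finset.coe_image, Set.mem_image, Finset.mem_coe, Finset.mem_sigma,
        Finset.mem_range]
      refine ⟨⟨(Nat.unpair k).1, (Nat.unpair k).2⟩, ⟨?_, h.1⟩, rfl⟩
      by_contra hNk
      push Not at hNk
      have h1 := (ht _ _ h.2).2
      have h2 := aux_le_one P (h𝒳 (hX𝒳 k))
      have h3 : 1 / (((Nat.unpair k).1 : ℝ) + 1) ≤ 1 / ((N : ℝ) + 1) := by
        gcongr
      rw [Real.dist_eq, abs_of_nonpos (by linarith)] at hk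
      linarith
    · exfalso
      rw [h] at hk
      simp at hk
      linarith
  have hYt := H X hX𝒳 (aux_tim_of P X (fun n => h𝒳 (hX𝒳 n)) hXlim) Y hYX
  have hYL : ∀ n, Y n ∈ L0pos P := by
    intro n
    refine convexHull_min ?_ (aux_L0conv P) (hYX n)
    rintro g ⟨k, _, rfl⟩
    exact h𝒳 (hX𝒳 k)
  have := aux_of_tim P Y hYL hYt
  have := le_of_tendsto' this fun n => (hlt n).le
  linarith

lemma aux_step {Ω : Type*} [MeasurableSpace Ω] (P : Measure Ω) [IsProbabilityMeasure P]
    (𝒳 : Set (Ω → ℝ)) (h𝒳 : 𝒳 ⊆ L0pos P) (h0 : (0 : Ω → ℝ) ∈ 𝒳) (hsolid : Solid P 𝒳)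
    (hbdd : Tendsto (fun n : ℕ => ⨆ X ∈ 𝒳, P {ω | (n : ℝ) < X ω}) atTop (𝓝 0))
    (H : ∀ X : ℕ → Ω → ℝ, (∀ n, X n ∈ 𝒳) →
        TendstoInMeasure P X atTop (fun _ => (0 : ℝ)) →
        ∀ Y : ℕ → Ω → ℝ, (∀ n, Y n ∈ convexHull ℝ {g | ∃ k, n ≤ k ∧ g = X k}) →
          TendstoInMeasure P Y atTop (fun _ => (0 : ℝ))) (ε : ℝ) (hε : 0 < ε) :
    ∃ (n : ℕ) (B : Set Ω), MeasurableSet B ∧ P Bᶜ ≤ ENNReal.ofReal ε ∧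
      ∀ X ∈ 𝒳, ∫⁻ ω in {ω | (n : ℝ) < X ω}, ENNReal.ofReal (X ω) ∂(P.restrict B)
        ≤ ENNReal.ofReal ε := by
  obtain ⟨δ, hδ, hK⟩ := aux_locconv P 𝒳 h𝒳 h0 H (ε / 4) (by positivity)
  obtain ⟨n, hn⟩ := ((ENNReal.tendsto_nhds_zero.1 hbdd) (ENNReal.ofReal δ)
    (ENNReal.ofReal_pos.2 hδ)).exists
  have hnX : ∀ X ∈ 𝒳, P {ω | (n : ℝ) < X ω} ≤ ENNReal.ofReal δ := fun X hX =>
    (le_iSup₂ (f := fun X (_ : X ∈ 𝒳) => P {ω | (n : ℝ) < X ω}) X hX).trans hn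
  set K0 : Set (Ω → ℝ) := {X | X ∈ 𝒳 ∧ 1 - δ ≤ ∫ ω, (1 + X ω)⁻¹ ∂P} with hK0
  have h0K : (0 : Ω → ℝ) ∈ K0 := ⟨h0, by simp; linarith⟩
  obtain ⟨B, hB, hPB, hintg⟩ := aux_set P (convexHull ℝ K0)
    (convexHull_min (fun X hX => h𝒳 hX.1) (aux_L0conv P))
    ⟨0, subset_convexHull ℝ _ h0K⟩ (convex_convexHull ℝ _) (ε / 4) hK
  have h4 : 4 * (ε / 4) = ε := by ring
  rw [h4] at hPB hintg
  refine ⟨n, B, hB, hPB, fun X hX => ?_⟩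
  have hXm := (h𝒳 hX).1
  have hS : MeasurableSet {ω | (n : ℝ) < X ω} := measurableSet_lt measurable_const hXm
  have hmem : ({ω | (n : ℝ) < X ω}.indicator X) ∈ 𝒳 := by
    refine hsolid X hX _ ⟨hXm.indicator hS, ?_⟩ ?_
    · filter_upwards [(h𝒳 hX).2] with ω h
      exact Set.indicator_apply_nonneg fun _ => h
    · filter_upwards [(h𝒳 hX).2] with ω h
      exact Set.indicator_apply_le' (fun _ => le_rfl) (fun _ => h)
  have hmemK : ({ω | (n : ℝ) < X ω}.indicator X) ∈ K0 := by
    refine ⟨hmem, ?_⟩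
    have h1 : ∫ ω, (1 - {ω | (n : ℝ) < X ω}.indicator (fun _ => (1 : ℝ)) ω) ∂P ≤
        ∫ ω, (1 + {ω | (n : ℝ) < X ω}.indicator X ω)⁻¹ ∂P := by
      refine integral_mono_ae ((integrable_const _).sub ((integrable_const _).indicator hS)) ?_ ?_
      · refine aux_integrable (((h𝒳 hmem).1.const_add 1).inv) (C := 1) ?_
        filter_upwards [(h𝒳 hmem).2] with ω hω using aux_inv_bd hω
      · filter_upwards [(h𝒳 hX).2] with ω h
        by_cases hω : (n : ℝ) < X ω
        · simp [Set.indicator, hω]; linarith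
        · simp [Set.indicator, hω]
    rw [integral_sub (integrable_const _) ((integrable_const _).indicator hS),
      integral_indicator hS] at h1
    have h2 : (P {ω | (n : ℝ) < X ω}).toReal ≤ δ := ENNReal.toReal_le_of_le_ofReal hδ.le (hnX X hX)
    simp [Measure.real] at h1
    linarith
  refine le_trans (le_of_eq ?_) (hintg _ (subset_convexHull ℝ _ hmemK))
  rw [← lintegral_indicator hS]
  congr 1
  ext ω
  by_cases hω : (n : ℝ) < X ω <;> simp [Set.indicator, hω]

lemma aux_fwd {Ω : Type*} [MeasurableSpace Ω] (P : Measure Ω) [IsProbabilityMeasure P]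
    (𝒳 : Set (Ω → ℝ)) (h𝒳 : 𝒳 ⊆ L0pos P) (h0 : (0 : Ω → ℝ) ∈ 𝒳) (hsolid : Solid P 𝒳)
    (hbdd : Tendsto (fun n : ℕ => ⨆ X ∈ 𝒳, P {ω | (n : ℝ) < X ω}) atTop (𝓝 0))
    (H : ∀ X : ℕ → Ω → ℝ, (∀ n, X n ∈ 𝒳) →
        TendstoInMeasure P X atTop (fun _ => (0 : ℝ)) →
        ∀ Y : ℕ → Ω → ℝ, (∀ n, Y n ∈ convexHull ℝ {g | ∃ k, n ≤ k ∧ g = X k}) →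
          TendstoInMeasure P Y atTop (fun _ => (0 : ℝ))) :
    ∃ Q : Measure Ω, IsProbabilityMeasure Q ∧ Q ≪ P ∧ P ≪ Q ∧ UnifInt Q 𝒳 := by
  set a : ℕ → ENNReal := fun k => ENNReal.ofReal ((1 / 2 : ℝ) ^ k) with ha
  have ha1 : ∀ k, a k ≤ 1 := fun k => by
    rw [ha]; simp only
    rw [ENNReal.ofReal_le_one]
    exact pow_le_one₀ (by norm_num) (by norm_num)
  have ha0 : ∀ k, a k ≠ 0 := fun k => by
    have : (0 : ℝ) < (1 / 2 : ℝ) ^ k := by positivity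
    simpa [ha] using this
  have hamono : ∀ k m, k ≤ m → a m ≤ a k := fun k m hkm =>
    ENNReal.ofReal_le_ofReal (pow_le_pow_of_le_one (by norm_num) (by norm_num) hkm)
  have haS : ∑' k, a k ≠ ⊤ := by
    have hs : Summable (fun i : ℕ => (1 / 2 : ℝ) ^ i) :=
      (summable_geometric_of_lt_one (by norm_num) (by norm_num))
    rw [ha, ← ENNReal.ofReal_tsum_of_nonneg (fun i => by positivity) hs]
    exact ENNReal.ofReal_ne_top
  have halim : Tendsto a atTop (𝓝 0) := ENNReal.tendsto_atTop_zero_of_tsum_ne_top haS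
  have hstep := fun k : ℕ => aux_step P 𝒳 h𝒳 h0 hsolid hbdd H ((1 / 2 : ℝ) ^ k) (by positivity)
  choose n B hB hPB hintg using hstep
  set A : ℕ → Set Ω := fun m => ⋂ k, ⋂ (_ : m ≤ k), B k with hA
  have hAB : ∀ m k, m ≤ k → A m ⊆ B k := fun m k hmk => by
    intro ω hω
    simp only [hA, Set.mem_iInter] at hω
    exact hω k hmk
  have hAm : ∀ m, MeasurableSet (A m) := fun m =>
    MeasurableSet.iInter fun k => MeasurableSet.iInter fun _ => hB k
  have hcover : ∀ᵐ ω ∂P, ∃ m, ω ∈ A m := by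
    have hsum : ∑' k, P (B k)ᶜ ≠ ⊤ := ne_top_of_le_ne_top haS (ENNReal.tsum_le_tsum hPB)
    filter_upwards [ae_eventually_notMem hsum] with ω hω
    obtain ⟨m, hm⟩ := eventually_atTop.1 hω
    refine ⟨m, ?_⟩
    simp only [hA, Set.mem_iInter]
    intro k hk
    simpa using hm k hk
  -- bounds
  have hL1 : ∀ m k N, m ≤ k → n k ≤ N → ∀ X ∈ 𝒳,
      ∫⁻ ω in {ω | (N : ℝ) < X ω}, ENNReal.ofReal (X ω) ∂(P.restrict (A m)) ≤ a k := by
    intro m k N hmk hN X hX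
    refine le_trans (lintegral_mono' (Measure.restrict_mono ?_
      (Measure.restrict_mono (hAB m k hmk) le_rfl)) le_rfl) (hintg k X hX)
    intro ω hω
    have h1 : (N : ℝ) < X ω := hω
    have h2 : (n k : ℝ) ≤ N := by exact_mod_cast hN
    exact lt_of_le_of_lt h2 h1
  have hL2 : ∀ m N, ∀ X ∈ 𝒳,
      ∫⁻ ω in {ω | (N : ℝ) < X ω}, ENNReal.ofReal (X ω) ∂(P.restrict (A m)) ≤ n m + 1 := by
    intro m N X hX
    have hS : MeasurableSet {ω | (n m : ℝ) < X ω} := measurableSet_lt measurable_const (h𝒳 hX).1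
    calc ∫⁻ ω in {ω | (N : ℝ) < X ω}, ENNReal.ofReal (X ω) ∂(P.restrict (A m))
        ≤ ∫⁻ ω, ENNReal.ofReal (X ω) ∂(P.restrict (A m)) := setLIntegral_le_lintegral _ _
      _ ≤ ∫⁻ ω, ((n m : ENNReal) + {ω | (n m : ℝ) < X ω}.indicator
            (fun ω => ENNReal.ofReal (X ω)) ω) ∂(P.restrict (A m)) := by
          apply lintegral_mono
          intro ω
          by_cases hω : (n m : ℝ) < X ω
          · simp [Set.indicator, hω]
          · simp only [Set.indicator]
            push Not at hω
            refine le_trans ?_ le_self_add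
            rw [← ENNReal.ofReal_natCast]
            exact ENNReal.ofReal_le_ofReal hω
      _ = n m * (P.restrict (A m)) Set.univ + ∫⁻ ω in {ω | (n m : ℝ) < X ω},
            ENNReal.ofReal (X ω) ∂(P.restrict (A m)) := by
          rw [lintegral_add_left measurable_const, lintegral_const, lintegral_indicator hS]
      _ ≤ n m * 1 + 1 := by
          gcongr
          · rw [Measure.restrict_apply_univ]; exact prob_le_one
          · exact (hL1 m m (n m) le_rfl le_rfl X hX).trans (ha1 m)
      _ = n m + 1 := by rw [mul_one]
  set w : ℕ → ENNReal := fun m => a m * (a m * ((n m : ENNReal) + 1)⁻¹) with hw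
  have hninv : ∀ m, ((n m : ENNReal) + 1)⁻¹ ≤ 1 := fun m => by
    rw [ENNReal.inv_le_one]; exact le_add_self
  have hw0 : ∀ m, w m ≠ 0 := fun m => by
    refine mul_ne_zero (ha0 m) (mul_ne_zero (ha0 m) ?_)
    rw [ENNReal.inv_ne_zero]
    exact ENNReal.add_ne_top.2 ⟨ENNReal.natCast_ne_top _, ENNReal.one_ne_top⟩
  have hwa : ∀ m, w m ≤ a m := fun m => by
    calc w m ≤ a m * (1 * 1) := by
          rw [hw]; simp only; gcongr
          · exact ha1 m
          · exact hninv m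
      _ = a m := by simp
  have hwL : ∀ k N, n k ≤ N → ∀ X ∈ 𝒳, ∀ m, w m *
      ∫⁻ ω in {ω | (N : ℝ) < X ω}, ENNReal.ofReal (X ω) ∂(P.restrict (A m)) ≤ a m * a k := by
    intro k N hN X hX m
    rcases le_or_gt m k with hmk | hmk
    · exact mul_le_mul' (hwa m) (hL1 m k N hmk hN X hX)
    · calc w m * ∫⁻ ω in {ω | (N : ℝ) < X ω}, ENNReal.ofReal (X ω) ∂(P.restrict (A m))
          ≤ w m * (n m + 1) := by gcongr; exact hL2 m N X hX
        _ = a m * a m := by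
            rw [hw]; simp only
            rw [mul_assoc, mul_assoc, ENNReal.inv_mul_cancel, mul_one]
            · simp
            · exact ENNReal.add_ne_top.2 ⟨ENNReal.natCast_ne_top _, ENNReal.one_ne_top⟩
        _ ≤ a m * a k := by gcongr; exact hamono k m hmk.le
  set Q' : Measure Ω := Measure.sum (fun m => w m • P.restrict (A m)) with hQ'
  have hPQ : P ≪ Q' := by
    refine Measure.AbsolutelyContinuous.mk fun s hs h => ?_
    rw [hQ', Measure.sum_apply_eq_zero] at h
    have h1 : ∀ m, P (s ∩ A m) = 0 := by
      intro m
      have := h m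
      rw [Measure.smul_apply, smul_eq_mul, Measure.restrict_apply hs] at this
      exact (mul_eq_zero.1 this).resolve_left (hw0 m)
    have h2 : P (⋃ m, s ∩ A m) = 0 := measure_iUnion_null h1
    refine le_antisymm ?_ zero_le
    rw [← h2]
    apply measure_mono_ae
    filter_upwards [hcover] with ω ⟨m, hm⟩ hω
    exact Set.mem_iUnion.2 ⟨m, hω, hm⟩
  have hQP : Q' ≪ P := by
    refine Measure.absolutelyContinuous_sum_left fun m => ?_
    exact (Measure.restrict_le_self.absolutelyContinuous).smul_left _
  have hQtop : Q' Set.univ ≠ ⊤ := by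
    rw [hQ', Measure.sum_apply _ MeasurableSet.univ]
    refine ne_top_of_le_ne_top haS (ENNReal.tsum_le_tsum fun m => ?_)
    rw [Measure.smul_apply, smul_eq_mul, Measure.restrict_apply_univ]
    calc w m * P (A m) ≤ a m * 1 := mul_le_mul' (hwa m) prob_le_one
      _ = a m := mul_one _
  have hQ0 : Q' Set.univ ≠ 0 := by
    intro h
    have := hPQ h
    simp at this
  have hcinv0 : (Q' Set.univ)⁻¹ ≠ 0 := ENNReal.inv_ne_zero.2 hQtop
  have hcinvt : (Q' Set.univ)⁻¹ ≠ ⊤ := ENNReal.inv_ne_top.2 hQ0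
  refine ⟨(Q' Set.univ)⁻¹ • Q', ⟨?_⟩, hQP.smul_left _, ?_, ?_⟩
  · rw [Measure.smul_apply, smul_eq_mul, ENNReal.inv_mul_cancel hQ0 hQtop]
  · refine Measure.AbsolutelyContinuous.mk fun s hs h => hPQ ?_
    rw [Measure.smul_apply, smul_eq_mul] at h
    exact (mul_eq_zero.1 h).resolve_left hcinv0
  · unfold UnifInt
    rw [ENNReal.tendsto_nhds_zero]
    intro e he
    have hlim : Tendsto (fun k => (Q' Set.univ)⁻¹ * ((∑' m, a m) * a k)) atTop (𝓝 0) := by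
      have h1 := ENNReal.Tendsto.const_mul halim (Or.inr haS)
      have h2 := ENNReal.Tendsto.const_mul h1 (Or.inr hcinvt)
      simpa using h2
    obtain ⟨k, hk⟩ := ((ENNReal.tendsto_nhds_zero.1 hlim) e he).exists
    filter_upwards [eventually_ge_atTop (n k)] with N hN
    refine iSup₂_le fun X hX => le_trans ?_ hk
    have hS : MeasurableSet {ω | (N : ℝ) < X ω} := measurableSet_lt measurable_const (h𝒳 hX).1
    rw [← lintegral_indicator hS, lintegral_smul_measure, smul_eq_mul, hQ', lintegral_sum_measure,
      ← ENNReal.tsum_mul_right]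
    gcongr with m
    rw [lintegral_smul_measure, smul_eq_mul, lintegral_indicator hS]
    exact hwL k N hN X hX m

lemma aux_bwd {Ω : Type*} [MeasurableSpace Ω] (P : Measure Ω) [IsProbabilityMeasure P]
    (𝒳 : Set (Ω → ℝ)) (h𝒳 : 𝒳 ⊆ L0pos P) (Q : Measure Ω) [IsProbabilityMeasure Q]
    (hQP : Q ≪ P) (hPQ : P ≪ Q) (hUI : UnifInt Q 𝒳)
    (X : ℕ → Ω → ℝ) (hX : ∀ n, X n ∈ 𝒳) (hXt : TendstoInMeasure P X atTop (fun _ => (0 : ℝ)))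
    (Y : ℕ → Ω → ℝ) (hY : ∀ n, Y n ∈ convexHull ℝ {g | ∃ k, n ≤ k ∧ g = X k}) :
    TendstoInMeasure P Y atTop (fun _ => (0 : ℝ)) := by
  have hXm : ∀ n, Measurable (X n) := fun n => (h𝒳 (hX n)).1
  have hX0 : ∀ n, ∀ᵐ ω ∂Q, 0 ≤ X n ω := fun n => hQP.ae_le (h𝒳 (hX n)).2
  have hXQ := aux_tim_ac hQP hXm hXt
  have hmin : ∀ N : ℕ, Tendsto (fun n => ∫⁻ ω, ENNReal.ofReal (min (X n ω) N) ∂Q) atTop (𝓝 0) := by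
    intro N
    apply tendsto_of_subseq_tendsto
    intro ns hns
    obtain ⟨ms, hms, hae⟩ := (hXQ.comp hns).exists_seq_tendsto_ae
    refine ⟨ms, ?_⟩
    have : ∫⁻ _ : Ω, (0 : ENNReal) ∂Q = 0 := lintegral_zero
    rw [← this]
    refine tendsto_lintegral_of_dominated_convergence (fun _ => (N : ENNReal))
      (fun n => ((hXm _).min measurable_const).ennreal_ofReal) (fun n => ?_) (by simp) ?_
    · refine Filter.Eventually.of_forall fun ω => ?_
      simp only
      rw [← ENNReal.ofReal_natCast]
      exact ENNReal.ofReal_le_ofReal (min_le_right _ _)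
    · filter_upwards [hae] with ω h
      have h1 : Tendsto (fun i => min (X (ns (ms i)) ω) (N : ℝ)) atTop (𝓝 (min 0 (N : ℝ))) :=
        h.min tendsto_const_nhds
      have h2 : min (0 : ℝ) (N : ℝ) = 0 := min_eq_left (Nat.cast_nonneg _)
      rw [h2] at h1
      have h3 := (ENNReal.continuous_ofReal.tendsto _).comp h1
      rw [ENNReal.ofReal_zero] at h3
      exact h3
  have hL1 : Tendsto (fun n => ∫⁻ ω, ‖X n ω‖ₑ ∂Q) atTop (𝓝 0) := by
    rw [ENNReal.tendsto_nhds_zero]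
    intro e he
    have he2 : 0 < e / 2 := ENNReal.half_pos he.ne'
    obtain ⟨N, hN⟩ := ((ENNReal.tendsto_nhds_zero.1 hUI) (e / 2) he2).exists
    filter_upwards [(ENNReal.tendsto_nhds_zero.1 (hmin N)) (e / 2) he2] with n hn
    have hS : MeasurableSet {ω | (N : ℝ) < X n ω} := measurableSet_lt measurable_const (hXm n)
    have hN' := (le_iSup₂ (f := fun X (_ : X ∈ 𝒳) =>
      ∫⁻ ω in {ω | (N : ℝ) < X ω}, ENNReal.ofReal (X ω) ∂Q) (X n) (hX n)).trans hN
    calc ∫⁻ ω, ‖X n ω‖ₑ ∂Q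
        ≤ ∫⁻ ω, (ENNReal.ofReal (min (X n ω) N) + {ω | (N : ℝ) < X n ω}.indicator
            (fun ω => ENNReal.ofReal (X n ω)) ω) ∂Q := by
          apply lintegral_mono_ae
          filter_upwards [hX0 n] with ω h
          rw [Real.enorm_of_nonneg h]
          by_cases hω : (N : ℝ) < X n ω
          · simp [Set.indicator, hω]
          · push Not at hω
            rw [min_eq_left hω]
            exact le_self_add
      _ = ∫⁻ ω, ENNReal.ofReal (min (X n ω) N) ∂Q +
          ∫⁻ ω in {ω | (N : ℝ) < X n ω}, ENNReal.ofReal (X n ω) ∂Q := by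
          rw [lintegral_add_left ((hXm n).min measurable_const).ennreal_ofReal,
            lintegral_indicator hS]
      _ ≤ e / 2 + e / 2 := add_le_add hn hN'
      _ = e := ENNReal.add_halves e
  have hset : ∀ e : ENNReal, Convex ℝ {Z : Ω → ℝ | Measurable Z ∧ ∫⁻ ω, ‖Z ω‖ₑ ∂Q ≤ e} := by
    intro e U hU V hV s t hs ht hst
    refine ⟨(hU.1.const_smul s).add (hV.1.const_smul t), ?_⟩
    calc ∫⁻ ω, ‖(s • U + t • V) ω‖ₑ ∂Q
        ≤ ∫⁻ ω, (ENNReal.ofReal s * ‖U ω‖ₑ + ENNReal.ofReal t * ‖V ω‖ₑ) ∂Q := by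
          apply lintegral_mono
          intro ω
          simp only [Pi.add_apply, Pi.smul_apply, smul_eq_mul]
          refine (enorm_add_le _ _).trans ?_
          rw [enorm_mul, enorm_mul, Real.enorm_of_nonneg hs, Real.enorm_of_nonneg ht]
      _ = ENNReal.ofReal s * ∫⁻ ω, ‖U ω‖ₑ ∂Q + ENNReal.ofReal t * ∫⁻ ω, ‖V ω‖ₑ ∂Q := by
          rw [lintegral_add_left (hU.1.enorm.const_mul _), lintegral_const_mul _ hU.1.enorm,
            lintegral_const_mul _ hV.1.enorm]
      _ ≤ ENNReal.ofReal s * e + ENNReal.ofReal t * e := by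
          gcongr
          · exact hU.2
          · exact hV.2
      _ = e := by
          rw [← add_mul, ← ENNReal.ofReal_add hs ht, hst, ENNReal.ofReal_one, one_mul]
  have hYm : ∀ n, Measurable (Y n) := by
    intro n
    have : Y n ∈ {Z : Ω → ℝ | Measurable Z ∧ ∫⁻ ω, ‖Z ω‖ₑ ∂Q ≤ ⊤} := by
      refine convexHull_min ?_ (hset ⊤) (hY n)
      rintro g ⟨k, _, rfl⟩
      exact ⟨hXm k, le_top⟩
    exact this.1
  refine aux_tim_ac hPQ hYm ?_
  apply tendstoInMeasure_of_tendsto_eLpNorm (p := 1) one_ne_zero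
      (fun n => (hYm n).aestronglyMeasurable) aestronglyMeasurable_const
  rw [ENNReal.tendsto_nhds_zero]
  intro e he
  obtain ⟨M, hM⟩ := eventually_atTop.1 ((ENNReal.tendsto_nhds_zero.1 hL1) e he)
  filter_upwards [eventually_ge_atTop M] with n hn
  have : Y n ∈ {Z : Ω → ℝ | Measurable Z ∧ ∫⁻ ω, ‖Z ω‖ₑ ∂Q ≤ e} := by
    refine convexHull_min ?_ (hset e) (hY n)
    rintro g ⟨k, hk, rfl⟩
    exact ⟨hXm k, hM k (hn.trans hk)⟩
  rw [eLpNorm_one_eq_lintegral_enorm]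
  simpa using this.2

/-- For a convex, solid, bounded-in-probability `𝒳 ⊆ L⁰₊`: forward convex combinations of
null sequences in `𝒳` converge to `0` in measure iff `𝒳` is uniformly `Q`-integrable for
some probability `Q ~ P`. -/
theorem stmt_9 {Ω : Type*} [MeasurableSpace Ω] (P : Measure Ω) [IsProbabilityMeasure P]
    (𝒳 : Set (Ω → ℝ)) (h𝒳 : 𝒳 ⊆ L0pos P) (hconv : Convex ℝ 𝒳) (hsolid : Solid P 𝒳)
    (hbdd : Tendsto (fun n : ℕ => ⨆ X ∈ 𝒳, P {ω | (n : ℝ) < X ω}) atTop (𝓝 0)) :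
    (∀ X : ℕ → Ω → ℝ, (∀ n, X n ∈ 𝒳) →
        TendstoInMeasure P X atTop (fun _ => (0 : ℝ)) →
        ∀ Y : ℕ → Ω → ℝ, (∀ n, Y n ∈ convexHull ℝ {g | ∃ k, n ≤ k ∧ g = X k}) →
          TendstoInMeasure P Y atTop (fun _ => (0 : ℝ))) ↔
    (∃ Q : Measure Ω, IsProbabilityMeasure Q ∧ Q ≪ P ∧ P ≪ Q ∧ UnifInt Q 𝒳) := by
  constructor
  · intro H
    rcases 𝒳.eq_empty_or_nonempty with hE | ⟨X0, hX0⟩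
    · refine ⟨P, inferInstance, Measure.AbsolutelyContinuous.rfl,
        Measure.AbsolutelyContinuous.rfl, ?_⟩
      subst hE
      simp [UnifInt]
    · have h0 : (0 : Ω → ℝ) ∈ 𝒳 := by
        refine hsolid X0 hX0 0 ⟨measurable_const, by simp⟩ ?_
        simpa using (h𝒳 hX0).2
      exact aux_fwd P 𝒳 h𝒳 h0 hsolid hbdd H
  · rintro ⟨Q, hQ, hQP, hPQ, hUI⟩ X hX hXt Y hY
    exact aux_bwd P 𝒳 h𝒳 Q hQP hPQ hUI X hX hXt Y hY
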